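/- arXiv:0705.1833 — 5 statements merged into one kernel-verified Lean document; each statement's English description precedes it below -/
import Mathlib

section
/- The transformation φ1 resolves the accessible singularity of the Garnier system and makes H1 polynomial: fix t, s ∈ ℂ with t, s ∉ {0,1} and t ≠ s; then there exists a polynomial P in four variables with complex coefficients such that for all complex (Q1,P1,Q2,P2) with Q1 ≠ 0, Q2 ∉ {0,1,t,s} and Q2 + 1/Q1 ∉ {0,1,t,s}, one has H1(ψ(Q1,P1,Q2,P2), t, s) = P(Q1,P1,Q2,P2). -/
/-- The quadratic form `B(q,p)` appearing in the Garnier Hamiltonian, with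
`κ = ((κ0+κ1+θ1+θ2-1)² - κ∞²)/4`. -/
noncomputable def garnierB (κ0 κ1 κinf θ1 θ2 t s q p : ℂ) : ℂ :=
  p ^ 2 + (((κ0 + κ1 + θ1 + θ2 - 1) ^ 2 - κinf ^ 2) / 4) / (q * (q - 1)) -
    ((θ1 - 1) / (q - t) + θ2 / (q - s) + κ0 / q + κ1 / (q - 1)) * p

/-- The Hamiltonian `H1` of the Garnier system in two variables. -/
noncomputable def garnierH1 (κ0 κ1 κinf θ1 θ2 q1 p1 q2 p2 t s : ℂ) : ℂ :=
  -(q1 * (q1 - 1) * (q1 - t) * (q1 - s) * (q2 - t)) /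
      ((q1 - q2) * t * (t - 1) * (t - s)) *
      garnierB κ0 κ1 κinf θ1 θ2 t s q1 p1 -
    (q2 * (q2 - 1) * (q2 - t) * (q2 - s) * (q1 - t)) /
      ((q2 - q1) * t * (t - 1) * (t - s)) *
      garnierB κ0 κ1 κinf θ1 θ2 t s q2 p2

/-- The inverse ψ of the symplectic transformation φ1, written componentwise:
`ψ(Q1,P1,Q2,P2) = (Q2 + 1/Q1, Q1(c - P1·Q1), Q2, P2 - Q1(c - P1·Q1))`. -/
noncomputable def psi (c : ℂ) : ℂ × ℂ × ℂ × ℂ → ℂ × ℂ × ℂ × ℂ :=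
  fun (Q1, P1, Q2, P2) =>
    (Q2 + 1 / Q1, Q1 * (c - P1 * Q1), Q2, P2 - Q1 * (c - P1 * Q1))

/-- `H1` evaluated on a tuple of canonical variables. -/
noncomputable def garnierH1' (κ0 κ1 κinf θ1 θ2 : ℂ) (v : ℂ × ℂ × ℂ × ℂ)
    (t s : ℂ) : ℂ :=
  garnierH1 κ0 κ1 κinf θ1 θ2 v.1 v.2.1 v.2.2.1 v.2.2.2 t s

/-- The polynomial `A(q) * B(q,p)`, over any commutative ring. -/
def polyF {R : Type*} [CommRing R] (k0 k1 th th2 k t s q p : R) : R :=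
  q * (q - 1) * (q - t) * (q - s) * p ^ 2 + k * (q - t) * (q - s) -
    (th * (q * (q - 1) * (q - s)) + th2 * (q * (q - 1) * (q - t)) +
      k0 * ((q - 1) * (q - t) * (q - s)) + k1 * (q * (q - t) * (q - s))) * p

/-- The polynomial form of `Q * F(q + 1/Q, Q * w)`, where `w = c - P * Q`. -/
def polyR {R : Type*} [CommRing R] (k0 k1 ki th th2 k t s w Q P q : R) : R :=
  w ^ 2 * (Q ^ 3 * (q * (q - 1) * (q - t) * (q - s)) +
      Q ^ 2 * (q * (q - 1) * (q - t) + q * (q - 1) * (q - s) + q * (q - t) * (q - s) +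
        (q - 1) * (q - t) * (q - s)) +
      Q * (q * (q - 1) + q * (q - t) + q * (q - s) + (q - 1) * (q - t) + (q - 1) * (q - s) +
        (q - t) * (q - s)) +
      (q + (q - 1) + (q - t) + (q - s))) +
    k * (Q * ((q - t) * (q - s)) + ((q - t) + (q - s))) -
    w * (th * (Q ^ 2 * (q * (q - 1) * (q - s)) +
          Q * (q * (q - 1) + q * (q - s) + (q - 1) * (q - s)) + (q + (q - 1) + (q - s))) +
      th2 * (Q ^ 2 * (q * (q - 1) * (q - t)) +
          Q * (q * (q - 1) + q * (q - t) + (q - 1) * (q - t)) + (q + (q - 1) + (q - t))) +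
      k0 * (Q ^ 2 * ((q - 1) * (q - t) * (q - s)) +
          Q * ((q - 1) * (q - t) + (q - 1) * (q - s) + (q - t) * (q - s)) +
          ((q - 1) + (q - t) + (q - s))) +
      k1 * (Q ^ 2 * (q * (q - t) * (q - s)) +
          Q * (q * (q - t) + q * (q - s) + (q - t) * (q - s)) + (q + (q - t) + (q - s)))) +
    P * (P * Q + ki)

/-- The transformed Hamiltonian; `d` stands for `1/(t(t-1)(t-s))`. -/
def polyH {R : Type*} [CommRing R] (k0 k1 ki th th2 k t s c d Q P q p : R) : R :=
  d * ((Q * (q - t) + 1) * polyF k0 k1 th th2 k t s q (p - Q * (c - P * Q)) -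
    (q - t) * polyR k0 k1 ki th th2 k t s (c - P * Q) Q P q)

theorem polyF_eq (κ0 κ1 κinf θ1 θ2 t s q p : ℂ) (h0 : q ≠ 0) (h1 : q ≠ 1) (h2 : q ≠ t)
    (h3 : q ≠ s) :
    q * (q - 1) * (q - t) * (q - s) * garnierB κ0 κ1 κinf θ1 θ2 t s q p =
      polyF κ0 κ1 (θ1 - 1) θ2 (((κ0 + κ1 + θ1 + θ2 - 1) ^ 2 - κinf ^ 2) / 4) t s q p := by
  have h1' := sub_ne_zero.2 h1
  have h2' := sub_ne_zero.2 h2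
  have h3' := sub_ne_zero.2 h3
  unfold garnierB polyF
  field_simp

theorem polyR_eq (κ0 κ1 κinf θ1 θ2 t s Q P q : ℂ) (h0 : Q ≠ 0) :
    Q * polyF κ0 κ1 (θ1 - 1) θ2 (((κ0 + κ1 + θ1 + θ2 - 1) ^ 2 - κinf ^ 2) / 4) t s (q + 1 / Q)
        (Q * ((κ0 + κ1 - κinf + θ1 + θ2 - 1) / 2 - P * Q)) =
      polyR κ0 κ1 κinf (θ1 - 1) θ2 (((κ0 + κ1 + θ1 + θ2 - 1) ^ 2 - κinf ^ 2) / 4) t s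
        ((κ0 + κ1 - κinf + θ1 + θ2 - 1) / 2 - P * Q) Q P q := by
  obtain ⟨w, hw⟩ : ∃ w, w = (κ0 + κ1 - κinf + θ1 + θ2 - 1) / 2 - P * Q := ⟨_, rfl⟩
  obtain ⟨k, hk⟩ : ∃ k, k = ((κ0 + κ1 + θ1 + θ2 - 1) ^ 2 - κinf ^ 2) / 4 := ⟨_, rfl⟩
  have key : w ^ 2 - (κ0 + κ1 + θ1 + θ2 - 1) * w + k = Q * (P * (P * Q + κinf)) := by
    rw [hw, hk]; ring
  rw [← hw, ← hk]
  have key2 : P * (P * Q + κinf) = (w ^ 2 - (κ0 + κ1 + θ1 + θ2 - 1) * w + k) / Q := by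
    rw [key]; field_simp
  unfold polyF polyR
  rw [key2]
  field_simp
  ring

/-- φ1 resolves the accessible singularity of the Garnier system and makes H1
polynomial: for fixed `t, s ∉ {0,1}` with `t ≠ s`, there is a polynomial `P` in four
variables such that `H1(ψ(Q1,P1,Q2,P2), t, s) = P(Q1,P1,Q2,P2)` on the indicated
domain, where `c = (κ0+κ1-κ∞+θ1+θ2-1)/2`. -/
theorem garnierH1_psi_polynomial (κ0 κ1 κinf θ1 θ2 t s : ℂ)
    (ht0 : t ≠ 0) (ht1 : t ≠ 1) (hs0 : s ≠ 0) (hs1 : s ≠ 1) (hts : t ≠ s) :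
    ∃ P : MvPolynomial (Fin 4) ℂ, ∀ Q1 P1 Q2 P2 : ℂ,
      Q1 ≠ 0 → Q2 ≠ 0 → Q2 ≠ 1 → Q2 ≠ t → Q2 ≠ s →
      Q2 + 1 / Q1 ≠ 0 → Q2 + 1 / Q1 ≠ 1 → Q2 + 1 / Q1 ≠ t → Q2 + 1 / Q1 ≠ s →
      garnierH1' κ0 κ1 κinf θ1 θ2
          (psi ((κ0 + κ1 - κinf + θ1 + θ2 - 1) / 2) (Q1, P1, Q2, P2)) t s =
        MvPolynomial.eval ![Q1, P1, Q2, P2] P := by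
  refine ⟨polyH (MvPolynomial.C κ0) (MvPolynomial.C κ1) (MvPolynomial.C κinf)
    (MvPolynomial.C (θ1 - 1)) (MvPolynomial.C θ2)
    (MvPolynomial.C (((κ0 + κ1 + θ1 + θ2 - 1) ^ 2 - κinf ^ 2) / 4))
    (MvPolynomial.C t) (MvPolynomial.C s)
    (MvPolynomial.C ((κ0 + κ1 - κinf + θ1 + θ2 - 1) / 2))
    (MvPolynomial.C (1 / (t * (t - 1) * (t - s))))
    (MvPolynomial.X 0) (MvPolynomial.X 1) (MvPolynomial.X 2) (MvPolynomial.X 3), ?_⟩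
  intro Q1 P1 Q2 P2 hQ h0 h1 h2 h3 g0 g1 g2 g3
  have hev : ∀ k0 k1 ki th th2 k c d : ℂ, MvPolynomial.eval ![Q1, P1, Q2, P2]
      (polyH (MvPolynomial.C k0) (MvPolynomial.C k1) (MvPolynomial.C ki)
        (MvPolynomial.C th) (MvPolynomial.C th2) (MvPolynomial.C k)
        (MvPolynomial.C t) (MvPolynomial.C s) (MvPolynomial.C c) (MvPolynomial.C d)
        (MvPolynomial.X 0) (MvPolynomial.X 1) (MvPolynomial.X 2) (MvPolynomial.X 3)) =
      polyH k0 k1 ki th th2 k t s c d Q1 P1 Q2 P2 := by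
    intro k0 k1 ki th th2 k c d
    simp only [polyH, polyF, polyR, map_add, map_sub, map_mul, map_pow, map_one,
      MvPolynomial.eval_C, MvPolynomial.eval_X]
    rfl
  rw [hev]
  have e1 := polyF_eq κ0 κ1 κinf θ1 θ2 t s (Q2 + 1 / Q1)
    (Q1 * ((κ0 + κ1 - κinf + θ1 + θ2 - 1) / 2 - P1 * Q1)) g0 g1 g2 g3
  have e2 := polyF_eq κ0 κ1 κinf θ1 θ2 t s Q2
    (P2 - Q1 * ((κ0 + κ1 - κinf + θ1 + θ2 - 1) / 2 - P1 * Q1)) h0 h1 h2 h3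
  unfold polyH
  rw [← polyR_eq κ0 κ1 κinf θ1 θ2 t s Q1 P1 Q2 hQ, ← e1, ← e2]
  have ht1' := sub_ne_zero.2 ht1
  have hts' := sub_ne_zero.2 hts
  have d1 : Q2 + 1 / Q1 - Q2 = 1 / Q1 := by ring
  have d2 : Q2 - (Q2 + 1 / Q1) = -(1 / Q1) := by ring
  simp only [garnierH1', garnierH1, psi]
  rw [d1, d2]
  generalize garnierB κ0 κ1 κinf θ1 θ2 t s (Q2 + 1 / Q1) _ = b1
  generalize garnierB κ0 κ1 κinf θ1 θ2 t s Q2 _ = b2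
  field_simp
  ring
end

section
/- The transformation φ1 makes the second Hamiltonian polynomial as well: fix t, s ∈ ℂ with t, s ∉ {0,1} and t ≠ s; then there exists a polynomial P in four variables with complex coefficients such that for all complex (Q1,P1,Q2,P2) with Q1 ≠ 0, Q2 ∉ {0,1,t,s} and Q2 + 1/Q1 ∉ {0,1,t,s}, one has H2(ψ(Q1,P1,Q2,P2), t, s) = P(Q1,P1,Q2,P2). -/
/-- The second Hamiltonian `H2 = π(H1)` of the Garnier system in two variables. -/
noncomputable def garnierH2' (κ0 κ1 κinf θ1 θ2 : ℂ) (v : ℂ × ℂ × ℂ × ℂ)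
    (t s : ℂ) : ℂ :=
  garnierH1 κ0 κ1 κinf θ2 θ1 v.2.2.1 v.2.2.2 v.1 v.2.1 s t

/-- Clearing denominators in `B`. -/
lemma garnierB_clear (κ0 κ1 κinf θ1 θ2 t s q p : ℂ)
    (h0 : q ≠ 0) (h1 : q - 1 ≠ 0) (ht : q - t ≠ 0) (hs : q - s ≠ 0) :
    q * (q - 1) * (q - t) * (q - s) * garnierB κ0 κ1 κinf θ1 θ2 t s q p =
      q * (q - 1) * (q - t) * (q - s) * p ^ 2 +
      (((κ0 + κ1 + θ1 + θ2 - 1) ^ 2 - κinf ^ 2) / 4) * (q - t) * (q - s) -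
      ((θ1 - 1) * q * (q - 1) * (q - s) + θ2 * q * (q - 1) * (q - t) +
        κ0 * (q - 1) * (q - t) * (q - s) + κ1 * q * (q - t) * (q - s)) * p := by
  unfold garnierB
  field_simp

/-- `H1` with the quadratic forms paired with their cubic/quartic prefactors. -/
lemma garnierH1_regroup (κ0 κ1 κinf θ1 θ2 q1 p1 q2 p2 t s D Q : ℂ)
    (hD : D = t * (t - 1) * (t - s)) (hQ : (q1 - q2)⁻¹ = -Q) :
    garnierH1 κ0 κ1 κinf θ1 θ2 q1 p1 q2 p2 t s =
      D⁻¹ * Q * ((q2 - t) * (q1 * (q1 - 1) * (q1 - t) * (q1 - s) *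
          garnierB κ0 κ1 κinf θ1 θ2 t s q1 p1) -
        (q1 - t) * (q2 * (q2 - 1) * (q2 - t) * (q2 - s) *
          garnierB κ0 κ1 κinf θ1 θ2 t s q2 p2)) := by
  have hQ' : (q2 - q1)⁻¹ = Q := by
    rw [← neg_sub q1 q2, inv_neg, hQ, neg_neg]
  unfold garnierH1
  have e1 : (q1 - q2) * t * (t - 1) * (t - s) = (q1 - q2) * D := by rw [hD]; ring
  have e2 : (q2 - q1) * t * (t - 1) * (t - s) = (q2 - q1) * D := by rw [hD]; ring
  rw [e1, e2, div_eq_mul_inv, div_eq_mul_inv, mul_inv, mul_inv, hQ, hQ']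
  ring

/-- φ1 makes the second Hamiltonian polynomial as well: for fixed `t, s ∉ {0,1}`
with `t ≠ s`, there is a polynomial `P` in four variables such that
`H2(ψ(Q1,P1,Q2,P2), t, s) = P(Q1,P1,Q2,P2)` on the indicated domain, where
`c = (κ0+κ1-κ∞+θ1+θ2-1)/2`. -/
theorem garnierH2_psi_polynomial (κ0 κ1 κinf θ1 θ2 t s : ℂ)
    (ht0 : t ≠ 0) (ht1 : t ≠ 1) (hs0 : s ≠ 0) (hs1 : s ≠ 1) (hts : t ≠ s) :
    ∃ P : MvPolynomial (Fin 4) ℂ, ∀ Q1 P1 Q2 P2 : ℂ,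
      Q1 ≠ 0 → Q2 ≠ 0 → Q2 ≠ 1 → Q2 ≠ t → Q2 ≠ s →
      Q2 + 1 / Q1 ≠ 0 → Q2 + 1 / Q1 ≠ 1 → Q2 + 1 / Q1 ≠ t → Q2 + 1 / Q1 ≠ s →
      garnierH2' κ0 κ1 κinf θ1 θ2
          (psi ((κ0 + κ1 - κinf + θ1 + θ2 - 1) / 2) (Q1, P1, Q2, P2)) t s =
        MvPolynomial.eval ![Q1, P1, Q2, P2] P := by
  set c : ℂ := (κ0 + κ1 - κinf + θ1 + θ2 - 1) / 2 with hc
  obtain ⟨σ, hσ⟩ : ∃ x : ℂ, x = κ0 + κ1 + θ1 + θ2 - 1 := ⟨_, rfl⟩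
  obtain ⟨g2, hg2⟩ : ∃ x : ℂ, x = -(θ2 - 1) * (1 + t) - θ1 * (1 + s) - κ0 * (1 + t + s)
    - κ1 * (t + s) := ⟨_, rfl⟩
  obtain ⟨g1, hg1⟩ : ∃ x : ℂ, x = (θ2 - 1) * t + θ1 * s + κ0 * (t + s + t * s)
    + κ1 * (t * s) := ⟨_, rfl⟩
  obtain ⟨g0, hg0⟩ : ∃ x : ℂ, x = -κ0 * (t * s) := ⟨_, rfl⟩
  obtain ⟨D, hD⟩ : ∃ x : ℂ, x = s * (s - 1) * (s - t) := ⟨_, rfl⟩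
  let x : MvPolynomial (Fin 4) ℂ := MvPolynomial.X 0
  let y : MvPolynomial (Fin 4) ℂ := MvPolynomial.X 1
  let a : MvPolynomial (Fin 4) ℂ := MvPolynomial.X 2
  let b : MvPolynomial (Fin 4) ℂ := MvPolynomial.X 3
  let k : ℂ → MvPolynomial (Fin 4) ℂ := fun z => MvPolynomial.C z
  let A := a - k s
  let w := k c - y * x
  let E1 := 3 * a ^ 2 - 2 * (1 + k t) * a + k t
  let E2 := 3 * a - (1 + k t)
  let F := a * (a - 1) * (a - k t) * (a - k s)
  let G := k σ * a ^ 3 + k g2 * a ^ 2 + k g1 * a + k g0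
  let G1 := 3 * k σ * a ^ 2 + 2 * k g2 * a + k g1
  let G2 := 3 * k σ * a + k g2
  refine ⟨k D⁻¹ * (-w ^ 2 * A * (A * (E1 * x ^ 2 + E2 * x + 1) + E1 * x + E2)
    + w * (2 * A * G * x ^ 2 + (G + A * G1) * x + A * G2)
    - k (c * (σ - c)) * A ^ 2
    + A * (2 * k c * y - y ^ 2 * x - k σ * y)
    + F * (A * x + 1) * (b ^ 2 - 2 * b * x * w) - G * (A * x + 1) * b), ?_⟩
  intro Q1 P1 Q2 P2 hQ1 h0 h1 ht hs h0' h1' ht' hs'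
  obtain ⟨u, hu⟩ : ∃ z : ℂ, z = 1 / Q1 := ⟨_, rfl⟩
  have hQu : Q1 * u = 1 := by rw [hu]; field_simp
  have hinv : (Q2 - (Q2 + u))⁻¹ = -Q1 := by
    rw [hu]; simp
  simp only [garnierH2', psi]
  rw [← hu] at h0' h1' ht' hs' ⊢
  rw [garnierH1_regroup _ _ _ _ _ _ _ _ _ _ _ D Q1 hD hinv,
    garnierB_clear _ _ _ _ _ _ _ _ _ h0 (sub_ne_zero.2 h1) (sub_ne_zero.2 hs) (sub_ne_zero.2 ht),
    garnierB_clear _ _ _ _ _ _ _ _ _ h0' (sub_ne_zero.2 h1') (sub_ne_zero.2 hs')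
      (sub_ne_zero.2 ht')]
  have hκ : ((κ0 + κ1 + θ2 + θ1 - 1) ^ 2 - κinf ^ 2) / 4 = c * (σ - c) := by
    rw [hc, hσ]; ring
  have hG : ∀ q : ℂ, (θ2 - 1) * q * (q - 1) * (q - t) + θ1 * q * (q - 1) * (q - s) +
      κ0 * (q - 1) * (q - s) * (q - t) + κ1 * q * (q - s) * (q - t) =
      σ * q ^ 3 + g2 * q ^ 2 + g1 * q + g0 := by
    intro q; rw [hσ, hg2, hg1, hg0]; ring
  rw [hκ, hG, hG]
  simp only [x, y, a, b, k, A, w, E1, E2, F, G, G1, G2, map_add, map_sub, map_mul, map_pow,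
    map_neg, map_one, map_ofNat, MvPolynomial.eval_X, MvPolynomial.eval_C, Matrix.cons_val]
  clear_value c
  clear hG hκ hσ hg2 hg1 hg0 hD hinv hu
  rw [mul_assoc]
  congr 1
  have hx : Q1 ≠ 0 := hQ1
  have hu : u = Q1⁻¹ := eq_inv_of_mul_eq_one_right hQu
  subst hu
  field_simp
  ring
end

section
/- Holomorphy in the chart r0: fix t, s ∈ ℂ with t, s ∉ {0,1} and t ≠ s; then there exists a polynomial P in four variables with complex coefficients such that for all complex (q1,p1,q2,p2) with q1 ≠ 0, p2 ≠ 0, q2 ∉ {0,1,t,s} and q2 + 1/q1 ∉ {0,1,t,s}, one has H1(ψ(q1,p1,q2,p2), t, s) = P(q1, p1, −(q2·p2 − κ0)·p2, 1/p2). That is, the polynomial Hamiltonian obtained from H1 by φ1 becomes again polynomial in the coordinates (x0,y0,z0,w0) = (q1, p1, −(q2p2−κ0)p2, 1/p2). -/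
/-- `(1+ax)(1+bx) = 1 + x * ee2 x a b`. -/
def ee2 {R : Type} [CommRing R] (x a b : R) : R := a + b + a * b * x

/-- `(1+ax)(1+bx)(1+dx) = 1 + x * ee3 x a b d`. -/
def ee3 {R : Type} [CommRing R] (x a b d : R) : R := ee2 x a b + d * (1 + x * ee2 x a b)

/-- `(1+ax)(1+bx)(1+dx)(1+ex) = 1 + x * ee4 x a b d e`. -/
def ee4 {R : Type} [CommRing R] (x a b d e : R) : R := ee3 x a b d + e * (1 + x * ee3 x a b d)

/-- The cubic `g` with `f(q) B(q,p) = f(q) p² + κ (q-t)(q-s) - g(q) p`. -/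
def gg {R : Type} [CommRing R] (k0 k1 th1 th2 t s q : R) : R :=
  (th1 - 1) * (q * (q - 1) * (q - s)) + th2 * (q * (q - 1) * (q - t)) +
    k0 * ((q - 1) * (q - t) * (q - s)) + k1 * (q * (q - t) * (q - s))

/-- The quotient by `x` of the numerator coming from the first summand. -/
def part1 {R : Type} [CommRing R] (k0 k1 th1 th2 k c t s x y q : R) : R :=
  ee4 x q (q - 1) (q - t) (q - s) * (c - y * x) ^ 2 + (-2 * c * y + y ^ 2 * x) +
    k * ee2 x (q - t) (q - s) + (th1 - 1 + th2 + k0 + k1) * y -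
    ((th1 - 1) * ee3 x q (q - 1) (q - s) + th2 * ee3 x q (q - 1) (q - t) +
      k0 * ee3 x (q - 1) (q - t) (q - s) + k1 * ee3 x q (q - t) (q - s)) * (c - y * x)

/-- The second summand, in terms of `q`, `m = q p`, `z = -(q p - κ0) p`, `u`. -/
def part2 {R : Type} [CommRing R] (k0 k1 th1 th2 k t s q m z u : R) : R :=
  -((q - 1) * (q - t) * (q - s)) * z -
    ((th1 - 1) * ((q - 1) * (q - s)) + th2 * ((q - 1) * (q - t)) + k1 * ((q - t) * (q - s))) * m -
    2 * ((q - 1) * (q - t) * (q - s)) * m * u + q * (q - 1) * (q - t) * (q - s) * u ^ 2 +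
    k * ((q - t) * (q - s)) + gg k0 k1 th1 th2 t s q * u

/-- `t (t-1) (t-s) H1` in terms of `q` and `m`. -/
def hamQ {R : Type} [CommRing R] (k0 k1 th1 th2 k c t s x y q m z : R) : R :=
  -(q - t) * part1 k0 k1 th1 th2 k c t s x y q +
    (x * (q - t) + 1) * part2 k0 k1 th1 th2 k t s q m z (x * (c - y * x))

/-- `t (t-1) (t-s) H1` in the chart. -/
def hamPoly {R : Type} [CommRing R] (k0 k1 th1 th2 k c t s x y z w : R) : R :=
  hamQ k0 k1 th1 th2 k c t s x y (w * (k0 - z * w)) (k0 - z * w) z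

theorem hamPoly_map {R S : Type} [CommRing R] [CommRing S] (f : R →+* S)
    (k0 k1 th1 th2 k c t s x y z w : R) :
    f (hamPoly k0 k1 th1 th2 k c t s x y z w) =
      hamPoly (f k0) (f k1) (f th1) (f th2) (f k) (f c) (f t) (f s) (f x) (f y) (f z) (f w) := by
  simp [hamPoly, hamQ, part1, part2, gg, ee2, ee3, ee4, map_ofNat f 2]

theorem garnierB_mul (κ0 κ1 κinf θ1 θ2 t s q p : ℂ)
    (h0 : q ≠ 0) (h1 : q ≠ 1) (ht : q ≠ t) (hs : q ≠ s) :
    q * (q - 1) * (q - t) * (q - s) * garnierB κ0 κ1 κinf θ1 θ2 t s q p =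
      q * (q - 1) * (q - t) * (q - s) * p ^ 2 +
        (((κ0 + κ1 + θ1 + θ2 - 1) ^ 2 - κinf ^ 2) / 4) * ((q - t) * (q - s)) -
        gg κ0 κ1 θ1 θ2 t s q * p := by
  have h1' := sub_ne_zero.mpr h1
  have ht' := sub_ne_zero.mpr ht
  have hs' := sub_ne_zero.mpr hs
  unfold garnierB gg
  field_simp

/-- First summand. -/
theorem first_part (k0 k1 th1 th2 k c t s x y q : ℂ) (hx : x ≠ 0)
    (hk : c ^ 2 + k - (th1 - 1 + th2 + k0 + k1) * c = 0) (X u : ℂ)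
    (hX : X = q + 1 / x) (hu : u = x * (c - y * x)) :
    x * (X * (X - 1) * (X - t) * (X - s) * u ^ 2 + k * ((X - t) * (X - s)) -
      gg k0 k1 th1 th2 t s X * u) = part1 k0 k1 th1 th2 k c t s x y q := by
  have hk' : k = (th1 - 1 + th2 + k0 + k1) * c - c ^ 2 := by linear_combination hk
  subst hX hu hk'
  unfold part1 gg ee4 ee3 ee2
  field_simp
  ring

theorem second_part (k0 k1 th1 th2 k t s q p u : ℂ) :
    q * (q - 1) * (q - t) * (q - s) * (p - u) ^ 2 + k * ((q - t) * (q - s)) -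
      gg k0 k1 th1 th2 t s q * (p - u) =
    part2 k0 k1 th1 th2 k t s q (q * p) (-(q * p - k0) * p) u := by
  unfold part2 gg
  ring

/-- Holomorphy in the chart `r0`: the polynomial Hamiltonian obtained from `H1`
by φ1 becomes again polynomial in the coordinates
`(x0,y0,z0,w0) = (q1, p1, -(q2·p2 - κ0)·p2, 1/p2)`. -/
theorem garnierH1_chart_r0 (κ0 κ1 κinf θ1 θ2 t s : ℂ)
    (ht0 : t ≠ 0) (ht1 : t ≠ 1) (hs0 : s ≠ 0) (hs1 : s ≠ 1) (hts : t ≠ s) :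
    ∃ P : MvPolynomial (Fin 4) ℂ, ∀ q1 p1 q2 p2 : ℂ,
      q1 ≠ 0 → p2 ≠ 0 → q2 ≠ 0 → q2 ≠ 1 → q2 ≠ t → q2 ≠ s →
      q2 + 1 / q1 ≠ 0 → q2 + 1 / q1 ≠ 1 → q2 + 1 / q1 ≠ t → q2 + 1 / q1 ≠ s →
      garnierH1' κ0 κ1 κinf θ1 θ2
          (psi ((κ0 + κ1 - κinf + θ1 + θ2 - 1) / 2) (q1, p1, q2, p2)) t s =
        MvPolynomial.eval ![q1, p1, -(q2 * p2 - κ0) * p2, 1 / p2] P := by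
  refine ⟨MvPolynomial.C (1 / (t * (t - 1) * (t - s))) *
    hamPoly (MvPolynomial.C κ0) (MvPolynomial.C κ1) (MvPolynomial.C θ1) (MvPolynomial.C θ2)
      (MvPolynomial.C (((κ0 + κ1 + θ1 + θ2 - 1) ^ 2 - κinf ^ 2) / 4))
      (MvPolynomial.C ((κ0 + κ1 - κinf + θ1 + θ2 - 1) / 2)) (MvPolynomial.C t) (MvPolynomial.C s)
      (MvPolynomial.X 0) (MvPolynomial.X 1) (MvPolynomial.X 2) (MvPolynomial.X 3), ?_⟩
  intro x y q p hx hp h0 h1 h2 h3 g0 g1 g2 g3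
  rw [map_mul, hamPoly_map]
  simp only [MvPolynomial.eval_C, MvPolynomial.eval_X]
  simp only [garnierH1', psi, garnierH1]
  set c := (κ0 + κ1 - κinf + θ1 + θ2 - 1) / 2 with hc
  have e1 := garnierB_mul κ0 κ1 κinf θ1 θ2 t s (q + 1 / x) (x * (c - y * x)) g0 g1 g2 g3
  have e2 := garnierB_mul κ0 κ1 κinf θ1 θ2 t s q (p - x * (c - y * x)) h0 h1 h2 h3
  rw [second_part] at e2
  have e3 := first_part κ0 κ1 θ1 θ2 (((κ0 + κ1 + θ1 + θ2 - 1) ^ 2 - κinf ^ 2) / 4) c t s x y q hx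
    (by rw [hc]; ring) (q + 1 / x) (x * (c - y * x)) rfl rfl
  rw [← e1] at e3
  generalize garnierB κ0 κ1 κinf θ1 θ2 t s (q + 1 / x) (x * (c - y * x)) = B1 at *
  generalize garnierB κ0 κ1 κinf θ1 θ2 t s q (p - x * (c - y * x)) = B2 at *
  have hq : (1 / p) * (κ0 - (-(q * p - κ0) * p) * (1 / p)) = q := by field_simp; ring
  have hm : κ0 - (-(q * p - κ0) * p) * (1 / p) = q * p := by field_simp; ring
  have hR : hamPoly κ0 κ1 θ1 θ2 (((κ0 + κ1 + θ1 + θ2 - 1) ^ 2 - κinf ^ 2) / 4) c t s x y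
      (-(q * p - κ0) * p) (1 / p) =
      -(q - t) * (x * ((q + 1 / x) * (q + 1 / x - 1) * (q + 1 / x - t) * (q + 1 / x - s) * B1)) +
      (x * (q - t) + 1) * (q * (q - 1) * (q - t) * (q - s) * B2) := by
    rw [e3, e2, hamPoly, hq, hm, hamQ]
  have ht1' := sub_ne_zero.mpr ht1
  have hts' := sub_ne_zero.mpr hts
  have d1 : q + 1 / x - q = 1 / x := by ring
  have d2 : q - (q + 1 / x) = -(1 / x) := by ring
  simp only [Matrix.cons_val]
  rw [hR, d1, d2]
  field_simp
  ring
end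

section
/- Holomorphy in the chart r1: fix t, s ∈ ℂ with t, s ∉ {0,1} and t ≠ s; then there exists a polynomial P in four variables with complex coefficients such that for all complex (q1,p1,q2,p2) with q1 ≠ 0, p2 ≠ 0, q2 ∉ {0,1,t,s} and q2 + 1/q1 ∉ {0,1,t,s}, one has H1(ψ(q1,p1,q2,p2), t, s) = P(q1, p1, −((q2−1)·p2 − κ1)·p2, 1/p2). That is, the polynomial Hamiltonian obtained from H1 by φ1 becomes again polynomial in the coordinates (x1,y1,z1,w1) = (q1, p1, −((q2−1)p2−κ1)p2, 1/p2). -/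
/-- `F(q,p) = q(q-1)(q-t)(q-s) B(q,p)`, cleared of denominators. -/
def gF {R : Type*} [CommRing R] (k k0 k1 a b t s q p : R) : R :=
  q * (q - 1) * (q - t) * (q - s) * p ^ 2
    - (a * (q * (q - 1) * (q - s)) + b * (q * (q - 1) * (q - t))
        + k0 * ((q - 1) * (q - t) * (q - s)) + k1 * (q * (q - t) * (q - s))) * p
    + k * ((q - t) * (q - s))

/-- `x F(q+1/x, x v)` as a polynomial, where `v = c - x y` and
`v² - n₃ v + κ = x y (x y + κ∞)`. -/
def gF1 {R : Type*} [CommRing R] (k ki k0 k1 a b t s x y v q : R) : R :=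
  let A0 := q * (q - 1) * (q - t) * (q - s)
  let A1 := 4 * q ^ 3 - 3 * (1 + t + s) * q ^ 2 + 2 * (t + s + t * s) * q - t * s
  let A2 := 6 * q ^ 2 - 3 * (1 + t + s) * q + (t + s + t * s)
  let A3 := 4 * q - (1 + t + s)
  let n3 := a + b + k0 + k1
  let n2 := -(a * (1 + s) + b * (1 + t) + k0 * (1 + t + s) + k1 * (t + s))
  let n1 := a * s + b * t + k0 * (t + s + t * s) + k1 * (t * s)
  let N0 := n3 * q ^ 3 + n2 * q ^ 2 + n1 * q - k0 * t * s
  let N1 := 3 * n3 * q ^ 2 + 2 * n2 * q + n1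
  let N2 := 3 * n3 * q + n2
  v ^ 2 * (A0 * x ^ 3 + A1 * x ^ 2 + A2 * x + A3) - v * (N0 * x ^ 2 + N1 * x + N2)
    + k * ((q - t) * (q - s) * x + (2 * q - t - s)) + y * (x * y + ki)

/-- `F(q, p-u)` in the chart, where `e = (q-1)p` and `z = -(e-κ1)p`. -/
def gF2 {R : Type*} [CommRing R] (k k0 k1 a b t s z e u q : R) : R :=
  let A1 := q * (q - t) * (q - s)
  let N1 := a * (q * (q - s)) + b * (q * (q - t)) + k0 * ((q - t) * (q - s))
  0 - A1 * z - e * N1 - 2 * A1 * u * e + (q - 1) * A1 * u ^ 2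
    + (k1 * A1 + (q - 1) * N1) * u + k * ((q - t) * (q - s))

/-- The Hamiltonian in the chart, up to the factor `t(t-1)(t-s)`. -/
def gG {R : Type*} [CommRing R] (k ki c k0 k1 a b t s x y z w : R) : R :=
  let e := k1 - z * w
  let q := 1 + w * e
  let v := c - x * y
  (x * (q - t) + 1) * gF2 k k0 k1 a b t s z e (x * v) q
    - (q - t) * gF1 k ki k0 k1 a b t s x y v q

lemma gG_map {R S : Type*} [CommRing R] [CommRing S] (f : R →+* S)
    (k ki c k0 k1 a b t s x y z w : R) :
    f (gG k ki c k0 k1 a b t s x y z w) =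
      gG (f k) (f ki) (f c) (f k0) (f k1) (f a) (f b) (f t) (f s) (f x) (f y) (f z) (f w) := by
  simp [gG, gF1, gF2, map_ofNat]

lemma gF_eq (κ0 κ1 κinf θ1 θ2 t s q p : ℂ)
    (h0 : q ≠ 0) (h1 : q ≠ 1) (ht : q ≠ t) (hs : q ≠ s) :
    q * (q - 1) * (q - t) * (q - s) * garnierB κ0 κ1 κinf θ1 θ2 t s q p =
      gF (((κ0 + κ1 + θ1 + θ2 - 1) ^ 2 - κinf ^ 2) / 4) κ0 κ1 (θ1 - 1) θ2 t s q p := by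
  have h1' := sub_ne_zero.2 h1
  have ht' := sub_ne_zero.2 ht
  have hs' := sub_ne_zero.2 hs
  unfold garnierB gF
  generalize ((κ0 + κ1 + θ1 + θ2 - 1) ^ 2 - κinf ^ 2) / 4 = k
  field_simp
  ring

lemma gF1_eq (k ki c k0 k1 a b t s x y q : ℂ) (hx : x ≠ 0)
    (hc : c = (k0 + k1 - ki + a + b) / 2)
    (hk : k = ((k0 + k1 + a + b) ^ 2 - ki ^ 2) / 4) :
    x * gF k k0 k1 a b t s (q + 1 / x) (x * (c - x * y)) =
      gF1 k ki k0 k1 a b t s x y (c - x * y) q := by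
  have h : x * (y * (x * y + ki)) =
      (c - x * y) ^ 2 - (a + b + k0 + k1) * (c - x * y) + k := by
    rw [hk, hc]; ring
  have h2 : y * (x * y + ki) =
      ((c - x * y) ^ 2 - (a + b + k0 + k1) * (c - x * y) + k) / x := by
    rw [← h]; field_simp
  unfold gF1 gF
  dsimp only
  rw [h2]
  generalize c - x * y = v
  field_simp
  ring

lemma gF2_eq (k k0 k1 a b t s q p u : ℂ) :
    gF k k0 k1 a b t s q (p - u) =
      gF2 k k0 k1 a b t s (-((q - 1) * p - k1) * p) ((q - 1) * p) u q := by
  unfold gF gF2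
  ring

/-- Holomorphy in the chart `r1`: the polynomial Hamiltonian obtained from `H1`
by φ1 becomes again polynomial in the coordinates
`(x1,y1,z1,w1) = (q1, p1, -((q2-1)·p2 - κ1)·p2, 1/p2)`. -/
theorem garnierH1_chart_r1 (κ0 κ1 κinf θ1 θ2 t s : ℂ)
    (ht0 : t ≠ 0) (ht1 : t ≠ 1) (hs0 : s ≠ 0) (hs1 : s ≠ 1) (hts : t ≠ s) :
    ∃ P : MvPolynomial (Fin 4) ℂ, ∀ q1 p1 q2 p2 : ℂ,
      q1 ≠ 0 → p2 ≠ 0 → q2 ≠ 0 → q2 ≠ 1 → q2 ≠ t → q2 ≠ s →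
      q2 + 1 / q1 ≠ 0 → q2 + 1 / q1 ≠ 1 → q2 + 1 / q1 ≠ t → q2 + 1 / q1 ≠ s →
      garnierH1' κ0 κ1 κinf θ1 θ2
          (psi ((κ0 + κ1 - κinf + θ1 + θ2 - 1) / 2) (q1, p1, q2, p2)) t s =
        MvPolynomial.eval ![q1, p1, -((q2 - 1) * p2 - κ1) * p2, 1 / p2] P := by
  refine ⟨MvPolynomial.C (1 / (t * (t - 1) * (t - s))) *
    gG (MvPolynomial.C (((κ0 + κ1 + θ1 + θ2 - 1) ^ 2 - κinf ^ 2) / 4)) (MvPolynomial.C κinf)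
      (MvPolynomial.C ((κ0 + κ1 - κinf + θ1 + θ2 - 1) / 2)) (MvPolynomial.C κ0)
      (MvPolynomial.C κ1) (MvPolynomial.C (θ1 - 1)) (MvPolynomial.C θ2) (MvPolynomial.C t)
      (MvPolynomial.C s) (MvPolynomial.X 0) (MvPolynomial.X 1) (MvPolynomial.X 2)
      (MvPolynomial.X 3), ?_⟩
  intro x y q p hx hp hq0 hq1 hqt hqs hr0 hr1 hrt hrs
  rw [map_mul, gG_map]
  simp only [MvPolynomial.eval_C, MvPolynomial.eval_X, Matrix.cons_val]
  have e1 := gF_eq κ0 κ1 κinf θ1 θ2 t s (q + 1 / x)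
    (x * ((κ0 + κ1 - κinf + θ1 + θ2 - 1) / 2 - x * y)) hr0 hr1 hrt hrs
  have e2 := gF_eq κ0 κ1 κinf θ1 θ2 t s q
    (p - x * ((κ0 + κ1 - κinf + θ1 + θ2 - 1) / 2 - x * y)) hq0 hq1 hqt hqs
  have e3 := gF1_eq (((κ0 + κ1 + θ1 + θ2 - 1) ^ 2 - κinf ^ 2) / 4) κinf
    ((κ0 + κ1 - κinf + θ1 + θ2 - 1) / 2) κ0 κ1 (θ1 - 1) θ2 t s x y q hx (by ring) (by ring)
  rw [gF2_eq] at e2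
  have he : κ1 - -((q - 1) * p - κ1) * p * (1 / p) = (q - 1) * p := by
    field_simp; ring
  have hq : 1 + 1 / p * ((q - 1) * p) = q := by
    field_simp; ring
  simp only [garnierH1', psi, garnierH1, gG, he, hq]
  rw [← e3, ← e1, ← e2, mul_comm y x]
  have d1 : q + 1 / x - q = 1 / x := by ring
  have d2 : q - (q + 1 / x) = -(1 / x) := by ring
  rw [d1, d2]
  generalize garnierB κ0 κ1 κinf θ1 θ2 t s (q + 1 / x) _ = B1
  generalize garnierB κ0 κ1 κinf θ1 θ2 t s q _ = B2
  have h1 := sub_ne_zero.2 ht1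
  have h2 := sub_ne_zero.2 hts
  field_simp
  ring
end

section
/- Holomorphy in the chart r6: fix t, s ∈ ℂ with t, s ∉ {0,1} and t ≠ s; then there exists a polynomial P in four variables with complex coefficients such that for all complex (q1,p1,q2,p2) with q1 ≠ 0, q2 ∉ {0,1,t,s} and q2 + 1/q1 ∉ {0,1,t,s}, one has H1(ψ(q1,p1,q2,p2), t, s) = P(q1, p1 + p2/q1², q2 + 1/q1, p2). That is, the polynomial Hamiltonian obtained from H1 by φ1 becomes again polynomial in the coordinates (x6,y6,z6,w6) = (q1, p1 + p2/q1², q2 + 1/q1, p2). -/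
/-- The polynomial `q(q-1)(q-t)(q-s)B(q,p)`. -/
noncomputable def FF (κ0 κ1 κinf θ1 θ2 t s q p : ℂ) : ℂ :=
  q * (q - 1) * (q - t) * (q - s) * p ^ 2
    + (((κ0 + κ1 + θ1 + θ2 - 1) ^ 2 - κinf ^ 2) / 4) * (q - t) * (q - s)
    - ((θ1 - 1) * q * (q - 1) * (q - s) + θ2 * q * (q - 1) * (q - t)
      + κ0 * (q - 1) * (q - t) * (q - s) + κ1 * q * (q - t) * (q - s)) * p

lemma FF_eq (κ0 κ1 κinf θ1 θ2 t s q p : ℂ) (h0 : q ≠ 0) (h1 : q ≠ 1) (ht : q ≠ t) (hs : q ≠ s) :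
    q * (q - 1) * (q - t) * (q - s) * garnierB κ0 κ1 κinf θ1 θ2 t s q p
      = FF κ0 κ1 κinf θ1 θ2 t s q p := by
  have h1' := sub_ne_zero.2 h1
  have ht' := sub_ne_zero.2 ht
  have hs' := sub_ne_zero.2 hs
  unfold garnierB FF
  field_simp

/-- Value of the final polynomial, over any commutative ring. -/
def polyVal {R : Type*} [CommRing R] (κ0 κ1 κi κ θ1 θ2 t s c D x y z w : R) : R :=
  let n := x * y - c
  let m := x * n
  let p := w - m
  let G := κ0 + κ1 + θ1 + θ2 - 1
  let e1 := 1 + t + s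
  let e2 := t + s + t * s
  let e3 := t * s
  let A := (θ1 - 1) * (1 + s) + θ2 * (1 + t) + κ0 * e1 + κ1 * (t + s)
  let B := (θ1 - 1) * s + θ2 * t + κ0 * e2 + κ1 * (t * s)
  let E := κ0 * e3
  let f := z ^ 4 - e1 * z ^ 3 + e2 * z ^ 2 - e3 * z
  let f1 := 4 * z ^ 3 - 3 * e1 * z ^ 2 + 2 * e2 * z - e3
  let f2 := 6 * z ^ 2 - 3 * e1 * z + e2
  let f3 := 4 * z - e1
  let g := G * z ^ 3 - A * z ^ 2 + B * z - E
  let g1 := 3 * G * z ^ 2 - 2 * A * z + B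
  let g2 := 3 * G * z - A
  D * (-(x * (z - t) - 1) * (f * p ^ 2 + κ * (z - t) * (z - s) - g * p)
    + (z - t) * (n ^ 2 * (x ^ 3 * f - x ^ 2 * f1 + x * f2 - f3)
      + κ * (x * (z - t) * (z - s) - (2 * z - t - s))
      - n * (x ^ 2 * g - x * g1 + g2) + y * (x * y + κi)))

lemma key (κ0 κ1 κinf θ1 θ2 t s D x u y z w : ℂ) (hu : x * u = 1) :
    D * (-(x * (z - u - t)) * FF κ0 κ1 κinf θ1 θ2 t s z
          (w - x * (x * y - (κ0 + κ1 - κinf + θ1 + θ2 - 1) / 2))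
      + x * (z - t) * FF κ0 κ1 κinf θ1 θ2 t s (z - u)
          (x * (x * y - (κ0 + κ1 - κinf + θ1 + θ2 - 1) / 2)))
    = polyVal κ0 κ1 κinf (((κ0 + κ1 + θ1 + θ2 - 1) ^ 2 - κinf ^ 2) / 4) θ1 θ2 t s
        ((κ0 + κ1 - κinf + θ1 + θ2 - 1) / 2) D x y z w := by
  have hx : x ≠ 0 := left_ne_zero_of_mul_eq_one hu
  obtain rfl : u = x⁻¹ := eq_inv_of_mul_eq_one_right hu
  simp only [FF, polyVal]
  field_simp
  ring

/-- Holomorphy in the chart `r6`: the polynomial Hamiltonian obtained from `H1`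
by φ1 becomes again polynomial in the coordinates
`(x6,y6,z6,w6) = (q1, p1 + p2/q1², q2 + 1/q1, p2)`. -/
theorem garnierH1_chart_r6 (κ0 κ1 κinf θ1 θ2 t s : ℂ)
    (ht0 : t ≠ 0) (ht1 : t ≠ 1) (hs0 : s ≠ 0) (hs1 : s ≠ 1) (hts : t ≠ s) :
    ∃ P : MvPolynomial (Fin 4) ℂ, ∀ q1 p1 q2 p2 : ℂ,
      q1 ≠ 0 → q2 ≠ 0 → q2 ≠ 1 → q2 ≠ t → q2 ≠ s →
      q2 + 1 / q1 ≠ 0 → q2 + 1 / q1 ≠ 1 → q2 + 1 / q1 ≠ t → q2 + 1 / q1 ≠ s →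
      garnierH1' κ0 κ1 κinf θ1 θ2
          (psi ((κ0 + κ1 - κinf + θ1 + θ2 - 1) / 2) (q1, p1, q2, p2)) t s =
        MvPolynomial.eval ![q1, p1 + p2 / q1 ^ 2, q2 + 1 / q1, p2] P := by
  classical
  refine ⟨polyVal (MvPolynomial.C κ0) (MvPolynomial.C κ1) (MvPolynomial.C κinf)
    (MvPolynomial.C (((κ0 + κ1 + θ1 + θ2 - 1) ^ 2 - κinf ^ 2) / 4))
    (MvPolynomial.C θ1) (MvPolynomial.C θ2) (MvPolynomial.C t) (MvPolynomial.C s)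
    (MvPolynomial.C ((κ0 + κ1 - κinf + θ1 + θ2 - 1) / 2))
    (MvPolynomial.C ((t * (t - 1) * (t - s))⁻¹))
    (MvPolynomial.X 0) (MvPolynomial.X 1) (MvPolynomial.X 2) (MvPolynomial.X 3), ?_⟩
  intro q1 p1 q2 p2 hq h0 h1 h2 h3 k0 k1 k2 k3
  have ht1' := sub_ne_zero.2 ht1
  have hts' := sub_ne_zero.2 hts
  have K := key κ0 κ1 κinf θ1 θ2 t s ((t * (t - 1) * (t - s))⁻¹) q1 (1 / q1)
    (p1 + p2 / q1 ^ 2) (q2 + 1 / q1) p2 (by field_simp)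
  have hP : MvPolynomial.eval ![q1, p1 + p2 / q1 ^ 2, q2 + 1 / q1, p2]
      (polyVal (MvPolynomial.C κ0) (MvPolynomial.C κ1) (MvPolynomial.C κinf)
    (MvPolynomial.C (((κ0 + κ1 + θ1 + θ2 - 1) ^ 2 - κinf ^ 2) / 4))
    (MvPolynomial.C θ1) (MvPolynomial.C θ2) (MvPolynomial.C t) (MvPolynomial.C s)
    (MvPolynomial.C ((κ0 + κ1 - κinf + θ1 + θ2 - 1) / 2))
    (MvPolynomial.C ((t * (t - 1) * (t - s))⁻¹))
    (MvPolynomial.X 0) (MvPolynomial.X 1) (MvPolynomial.X 2) (MvPolynomial.X 3)) =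
      polyVal κ0 κ1 κinf (((κ0 + κ1 + θ1 + θ2 - 1) ^ 2 - κinf ^ 2) / 4) θ1 θ2 t s
        ((κ0 + κ1 - κinf + θ1 + θ2 - 1) / 2) ((t * (t - 1) * (t - s))⁻¹)
        q1 (p1 + p2 / q1 ^ 2) (q2 + 1 / q1) p2 := by
    simp only [polyVal, map_add, map_sub, map_mul, map_pow, map_neg, map_one, map_ofNat,
      MvPolynomial.eval_C, MvPolynomial.eval_X]
    rfl
  rw [hP, ← K]
  have e1 : q2 + 1 / q1 - 1 / q1 = q2 := by ring
  rw [e1]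
  have e2 : q1 * (q1 * (p1 + p2 / q1 ^ 2) - (κ0 + κ1 - κinf + θ1 + θ2 - 1) / 2)
      = p2 - q1 * ((κ0 + κ1 - κinf + θ1 + θ2 - 1) / 2 - p1 * q1) := by
    field_simp
    ring
  rw [e2, sub_sub_cancel, ← FF_eq _ _ _ _ _ _ _ _ _ h0 h1 h2 h3,
    ← FF_eq _ _ _ _ _ _ _ _ _ k0 k1 k2 k3]
  simp only [garnierH1', psi, garnierH1]
  generalize garnierB κ0 κ1 κinf θ1 θ2 t s q2 _ = B2
  generalize garnierB κ0 κ1 κinf θ1 θ2 t s _ _ = B1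
  have e3 : q2 + 1 / q1 - q2 = q1⁻¹ := by ring
  have e4 : q2 - (q2 + 1 / q1) = -q1⁻¹ := by ring
  rw [e3, e4]
  generalize q2 + 1 / q1 = z
  field_simp
  ring
end
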